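/- arXiv:1706.07175 — 4 statements merged into one kernel-verified Lean document; each statement's English description precedes it below -/
import Mathlib

section
/- Let q be a spectral norm on ℙ(ℂ^N) (i.e., q(P^n) = q(P)^n for all polynomials P and all n ≥ 1), and suppose there exist M > 0 and m ≥ 0 such that q(∂P/∂x_j) ≤ M (deg P)^m q(P) for every j ∈ {1,…,N} and every polynomial P with deg P ≥ 1. Then m ≥ 1. -/
open MvPolynomial

/-- `q` is a norm on the complex vector space `ℙ(ℂ^N)` of polynomials. -/
structure IsPolyNorm {N : ℕ} (q : MvPolynomial (Fin N) ℂ → ℝ) : Prop where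
  nonneg : ∀ P, 0 ≤ q P
  definite : ∀ P, q P = 0 → P = 0
  triangle : ∀ P Q, q (P + Q) ≤ q P + q Q
  homog : ∀ (c : ℂ) (P), q (c • P) = ‖c‖ * q P

/-- Let `q` be a spectral norm on `ℙ(ℂ^N)` satisfying Markov's inequality
`q(∂P/∂x_j) ≤ M (deg P)^m q(P)` for every `j` and every `P` with `deg P ≥ 1`. Then
`m ≥ 1`. -/
theorem statement15 {N : ℕ} (hN : 0 < N) (q : MvPolynomial (Fin N) ℂ → ℝ)
    (hq : IsPolyNorm q)
    (hspec : ∀ (P : MvPolynomial (Fin N) ℂ) (n : ℕ), 1 ≤ n → q (P ^ n) = q P ^ n)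
    (M m : ℝ) (hM : 0 < M) (hm : 0 ≤ m)
    (hmar : ∀ (j : Fin N) (P : MvPolynomial (Fin N) ℂ), 1 ≤ P.totalDegree →
      q (MvPolynomial.pderiv j P) ≤ M * (P.totalDegree : ℝ) ^ m * q P) :
    1 ≤ m := by
  by_contra hlt
  push Not at hlt
  let j : Fin N := ⟨0, hN⟩
  set a := q (X j) with ha
  have hXpos : 0 < a := lt_of_le_of_ne (hq.nonneg _) (fun h =>
    (MvPolynomial.X_ne_zero j) (hq.definite _ h.symm))
  have key : ∀ n : ℕ, 2 ≤ n → (n : ℝ) ^ (1 - m) ≤ M * a := by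
    intro n hn
    have hdeg : (X j ^ n : MvPolynomial (Fin N) ℂ).totalDegree = n :=
      MvPolynomial.totalDegree_X_pow j n
    have h := hmar j (X j ^ n) (by rw [hdeg]; omega)
    have hd : pderiv j (X j ^ n : MvPolynomial (Fin N) ℂ) = (n : ℂ) • X j ^ (n - 1) := by
      rw [MvPolynomial.pderiv_pow, MvPolynomial.pderiv_X_self, MvPolynomial.smul_eq_C_mul]
      simp
    rw [hd, hdeg, hq.homog, hspec _ _ (by omega), hspec _ _ (by omega), ← ha,
      Complex.norm_natCast] at h
    have hn0 : (0 : ℝ) < n := by exact_mod_cast (by omega : 0 < n)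
    have hpow : a ^ n = a ^ (n - 1) * a := by
      rw [← pow_succ]; congr 1; omega
    rw [hpow] at h
    have hap : 0 < a ^ (n - 1) := pow_pos hXpos _
    have h2 : (n : ℝ) ≤ M * (n : ℝ) ^ m * a := by
      refine le_of_mul_le_mul_right ?_ hap
      linarith
    rw [Real.rpow_sub hn0, Real.rpow_one, div_le_iff₀ (Real.rpow_pos_of_pos hn0 m)]
    linarith
  have ht := (tendsto_rpow_atTop (by linarith : 0 < 1 - m)).comp
    (tendsto_natCast_atTop_atTop (R := ℝ))
  obtain ⟨n, h1, h2⟩ := ((ht.eventually_gt_atTop (M * a)).and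
    (Filter.eventually_ge_atTop 2)).exists
  exact absurd (key n h2) (not_le.mpr h1)
end

section
/- Let E ⊂ ℂ be a nonempty compact set and r > 0. Define, for P ∈ ℂ[X], ‖P‖ = Σ_{k=0}^∞ (r^k/k!) ‖P^{(k)}‖_E and ‖P‖_σ = max_{|ζ|≤r} ‖P(· + ζ)‖_E = sup{ |P(x+ζ)| : x ∈ E, |ζ| ≤ r }. Then for every polynomial P, ‖P‖_σ ≤ ‖P‖ ≤ (deg P + 1) ‖P‖_σ; consequently lim_{n→∞} ‖P^n‖^{1/n} = ‖P‖_σ. -/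
open Polynomial Filter

/-- The `k`-th derivative `P^{(k)}` of a polynomial in one complex variable. -/
noncomputable def dIter (k : ℕ) (P : Polynomial ℂ) : Polynomial ℂ :=
  (fun Q : Polynomial ℂ => Polynomial.derivative Q)^[k] P

/-- The supremum norm `‖Q‖_E = sup_{x ∈ E} |Q(x)|`. -/
noncomputable def supC (E : Set ℂ) (P : Polynomial ℂ) : ℝ :=
  ⨆ z : E, ‖P.eval (z : ℂ)‖

/-- The norm `‖P‖ = ∑_{k=0}^∞ (r^k/k!) ‖P^{(k)}‖_E` (the sum is finite since `P^{(k)} = 0`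
for `k > deg P`). -/
noncomputable def normSum (E : Set ℂ) (r : ℝ) (P : Polynomial ℂ) : ℝ :=
  ∑' k : ℕ, r ^ k / (k.factorial : ℝ) * supC E (dIter k P)

/-- The spectral norm `‖P‖_σ = sup { |P(x+ζ)| : x ∈ E, |ζ| ≤ r }`. -/
noncomputable def normSigma (E : Set ℂ) (r : ℝ) (P : Polynomial ℂ) : ℝ :=
  ⨆ p : E × {ζ : ℂ // ‖ζ‖ ≤ r}, ‖P.eval ((p.1 : ℂ) + (p.2 : ℂ))‖

theorem aux_supC_le {E : Set ℂ} (hE : IsCompact E) (Q : Polynomial ℂ) {x : ℂ} (hx : x ∈ E) :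
    ‖Q.eval x‖ ≤ supC E Q := by
  have hb : BddAbove (Set.range fun z : E => ‖Q.eval (z : ℂ)‖) := by
    obtain ⟨C, hC⟩ := hE.exists_bound_of_continuousOn (f := fun z => Q.eval z)
      Q.continuous.continuousOn
    refine ⟨C, ?_⟩
    rintro _ ⟨z, rfl⟩
    exact hC z z.2
  exact le_ciSup hb (⟨x, hx⟩ : E)

theorem aux_supC_nonneg (E : Set ℂ) (Q : Polynomial ℂ) : 0 ≤ supC E Q :=
  Real.iSup_nonneg fun _ => norm_nonneg _

theorem aux_sigma_nonneg (E : Set ℂ) (r : ℝ) (Q : Polynomial ℂ) : 0 ≤ normSigma E r Q :=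
  Real.iSup_nonneg fun _ => norm_nonneg _

theorem aux_le_sigma {E : Set ℂ} (hE : IsCompact E) (r : ℝ) (Q : Polynomial ℂ) {x ζ : ℂ}
    (hx : x ∈ E) (hζ : ‖ζ‖ ≤ r) : ‖Q.eval (x + ζ)‖ ≤ normSigma E r Q := by
  have hb : BddAbove (Set.range fun p : E × {ζ : ℂ // ‖ζ‖ ≤ r} =>
      ‖Q.eval ((p.1 : ℂ) + (p.2 : ℂ))‖) := by
    obtain ⟨C, hC⟩ := (hE.prod (isCompact_closedBall (0 : ℂ) r)).exists_bound_of_continuousOn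
      (f := fun p : ℂ × ℂ => Q.eval (p.1 + p.2))
      (Q.continuous.comp (continuous_fst.add continuous_snd)).continuousOn
    refine ⟨C, ?_⟩
    rintro _ ⟨p, rfl⟩
    exact hC (p.1, p.2) ⟨p.1.2, by simpa using p.2.2⟩
  exact le_ciSup hb (⟨⟨x, hx⟩, ⟨ζ, hζ⟩⟩ : E × {ζ : ℂ // ‖ζ‖ ≤ r})

theorem aux_sigma_le {E : Set ℂ} (hne : E.Nonempty) {r : ℝ} (hr : 0 < r) (Q : Polynomial ℂ)
    {C : ℝ} (h : ∀ x ∈ E, ∀ ζ : ℂ, ‖ζ‖ ≤ r → ‖Q.eval (x + ζ)‖ ≤ C) : normSigma E r Q ≤ C := by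
  have : Nonempty E := hne.to_subtype
  have : Nonempty {ζ : ℂ // ‖ζ‖ ≤ r} := ⟨⟨0, by simpa using hr.le⟩⟩
  exact ciSup_le fun p => h p.1 p.1.2 p.2 p.2.2

theorem aux_iter (k : ℕ) (P : Polynomial ℂ) :
    iteratedDeriv k (fun z => P.eval z) = fun z => (dIter k P).eval z := by
  induction k with
  | zero => simp [dIter]
  | succ k ih =>
    rw [iteratedDeriv_succ, ih]
    funext z
    rw [Polynomial.deriv]
    simp only [dIter, Function.iterate_succ_apply']

theorem aux_normSum_eq (E : Set ℂ) (r : ℝ) (P : Polynomial ℂ) :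
    normSum E r P = ∑ k ∈ Finset.range (P.natDegree + 1),
      r ^ k / (k.factorial : ℝ) * supC E (dIter k P) := by
  refine tsum_eq_sum fun k hk => ?_
  have h0 : dIter k P = 0 :=
    Polynomial.iterate_derivative_eq_zero (by rw [Finset.mem_range] at hk; omega)
  rw [h0]
  simp [supC]

theorem aux_taylor (P : Polynomial ℂ) (x ζ : ℂ) :
    P.eval (x + ζ) = ∑ k ∈ Finset.range (P.natDegree + 1),
      ζ ^ k / (k.factorial : ℂ) * (dIter k P).eval x := by
  rw [add_comm, ← Polynomial.taylor_eval, Polynomial.eval_eq_sum_range,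
    Polynomial.natDegree_taylor]
  refine Finset.sum_congr rfl fun k _ => ?_
  have h : dIter k P = k.factorial • Polynomial.hasseDeriv k P :=
    (congrFun (Polynomial.factorial_smul_hasseDeriv (R := ℂ) k) P).symm
  have hk : (k.factorial : ℂ) ≠ 0 := by exact_mod_cast k.factorial_ne_zero
  rw [h, Polynomial.taylor_coeff, Polynomial.eval_smul, nsmul_eq_mul]
  field_simp

theorem aux_lower {E : Set ℂ} (hE : IsCompact E) (hne : E.Nonempty) {r : ℝ} (hr : 0 < r)
    (P : Polynomial ℂ) : normSigma E r P ≤ normSum E r P := by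
  refine aux_sigma_le hne hr P fun x hx ζ hζ => ?_
  rw [aux_taylor, aux_normSum_eq]
  refine (norm_sum_le _ _).trans (Finset.sum_le_sum fun k _ => ?_)
  rw [norm_mul, norm_div, norm_pow, Complex.norm_natCast]
  have := aux_supC_le hE (dIter k P) hx
  gcongr

theorem aux_upper {E : Set ℂ} (hE : IsCompact E) (hne : E.Nonempty) {r : ℝ} (hr : 0 < r)
    (P : Polynomial ℂ) : normSum E r P ≤ ((P.natDegree : ℝ) + 1) * normSigma E r P := by
  rw [aux_normSum_eq]
  have h : ∀ k ∈ Finset.range (P.natDegree + 1),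
      r ^ k / (k.factorial : ℝ) * supC E (dIter k P) ≤ normSigma E r P := by
    intro k _
    have hk : (0 : ℝ) < k.factorial := by exact_mod_cast k.factorial_pos
    have h1 : supC E (dIter k P) ≤ k.factorial * normSigma E r P / r ^ k := by
      have : Nonempty E := hne.to_subtype
      refine ciSup_le fun x => ?_
      have := Complex.norm_iteratedDeriv_le_of_forall_mem_sphere_norm_le (c := (x : ℂ))
        (f := fun z => P.eval z) (C := normSigma E r P) k hr
        P.differentiable.diffContOnCl (fun z hz => by
          have h2 := aux_le_sigma hE r P x.2 (ζ := z - x)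
            (by rw [← dist_eq_norm]; exact (Metric.mem_sphere.1 hz).le)
          simpa using h2)
      rwa [aux_iter] at this
    calc r ^ k / (k.factorial : ℝ) * supC E (dIter k P)
        ≤ r ^ k / (k.factorial : ℝ) * (k.factorial * normSigma E r P / r ^ k) := by gcongr
      _ = normSigma E r P := by field_simp
  have := Finset.sum_le_card_nsmul _ _ _ h
  simpa [nsmul_eq_mul] using this

theorem aux_sigma_pow {E : Set ℂ} (hE : IsCompact E) (hne : E.Nonempty) {r : ℝ} (hr : 0 < r)
    (P : Polynomial ℂ) {n : ℕ} (hn : n ≠ 0) : normSigma E r (P ^ n) = normSigma E r P ^ n := by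
  apply le_antisymm
  · refine aux_sigma_le hne hr _ fun x hx ζ hζ => ?_
    rw [Polynomial.eval_pow, norm_pow]
    exact pow_le_pow_left₀ (norm_nonneg _) (aux_le_sigma hE r P hx hζ) n
  · have h : normSigma E r P ≤ normSigma E r (P ^ n) ^ ((n : ℝ)⁻¹) := by
      refine aux_sigma_le hne hr _ fun x hx ζ hζ => ?_
      have h2 := aux_le_sigma hE r (P ^ n) hx hζ
      rw [Polynomial.eval_pow, norm_pow] at h2
      rw [← Real.pow_rpow_inv_natCast (norm_nonneg (P.eval (x + ζ))) hn]
      gcongr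
    calc normSigma E r P ^ n ≤ (normSigma E r (P ^ n) ^ ((n : ℝ)⁻¹)) ^ n :=
          pow_le_pow_left₀ (aux_sigma_nonneg E r P) h n
      _ = _ := Real.rpow_inv_natCast_pow (aux_sigma_nonneg E r _) hn

/-- Let `E ⊂ ℂ` be nonempty compact and `r > 0`. Then for every
polynomial `P`, `‖P‖_σ ≤ ‖P‖ ≤ (deg P + 1) ‖P‖_σ`; consequently
`lim_{n→∞} ‖P^n‖^{1/n} = ‖P‖_σ`. -/
theorem statement17 (E : Set ℂ) (hE : IsCompact E) (hne : E.Nonempty) (r : ℝ) (hr : 0 < r) :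
    (∀ P : Polynomial ℂ,
      normSigma E r P ≤ normSum E r P ∧
        normSum E r P ≤ ((P.natDegree : ℝ) + 1) * normSigma E r P) ∧
    ∀ P : Polynomial ℂ,
      Tendsto (fun n : ℕ => normSum E r (P ^ n) ^ ((1 : ℝ) / (n : ℝ))) atTop
        (nhds (normSigma E r P)) := by
  refine ⟨fun P => ⟨aux_lower hE hne hr P, aux_upper hE hne hr P⟩, fun P => ?_⟩
  have hs := aux_sigma_nonneg E r P
  set d : ℝ := (P.natDegree : ℝ) + 1 with hd
  have hd0 : 0 < d := by positivity
  have hlim : Tendsto (fun n : ℕ => ((n : ℝ) ^ ((1 : ℝ) / (n : ℝ)) * d ^ ((1 : ℝ) / (n : ℝ)))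
      * normSigma E r P) atTop (nhds (normSigma E r P)) := by
    have h1 : Tendsto (fun n : ℕ => (n : ℝ) ^ ((1 : ℝ) / (n : ℝ))) atTop (nhds 1) :=
      tendsto_rpow_div.comp tendsto_natCast_atTop_atTop
    have h2 : Tendsto (fun n : ℕ => d ^ ((1 : ℝ) / (n : ℝ))) atTop (nhds (d ^ (0 : ℝ))) :=
      (Real.continuousAt_const_rpow hd0.ne').tendsto.comp
        (tendsto_one_div_atTop_nhds_zero_nat (𝕜 := ℝ))
    rw [Real.rpow_zero] at h2
    simpa using (h1.mul h2).mul_const (normSigma E r P)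
  refine tendsto_of_tendsto_of_tendsto_of_le_of_le' tendsto_const_nhds hlim ?_ ?_
  · filter_upwards [eventually_ne_atTop 0] with n hn
    have h := aux_lower hE hne hr (P ^ n)
    rw [aux_sigma_pow hE hne hr P hn] at h
    rw [one_div]
    calc normSigma E r P = (normSigma E r P ^ n) ^ ((n : ℝ)⁻¹) :=
          (Real.pow_rpow_inv_natCast hs hn).symm
      _ ≤ _ := by gcongr
  · filter_upwards [eventually_ne_atTop 0] with n hn
    have h0 := (aux_sigma_nonneg E r (P ^ n)).trans (aux_lower hE hne hr (P ^ n))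
    have h := aux_upper hE hne hr (P ^ n)
    rw [aux_sigma_pow hE hne hr P hn] at h
    have hn1 : (1 : ℝ) ≤ n := by exact_mod_cast Nat.one_le_iff_ne_zero.2 hn
    have h3 : normSum E r (P ^ n) ≤ ((n : ℝ) * d) * normSigma E r P ^ n := by
      refine h.trans ?_
      gcongr
      rw [Polynomial.natDegree_pow, hd]
      push_cast
      linarith
    rw [one_div]
    calc normSum E r (P ^ n) ^ ((n : ℝ)⁻¹)
        ≤ (((n : ℝ) * d) * normSigma E r P ^ n) ^ ((n : ℝ)⁻¹) := by gcongr
      _ = _ := by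
        rw [Real.mul_rpow (by positivity) (by positivity),
          Real.mul_rpow (by positivity) hd0.le, Real.pow_rpow_inv_natCast hs hn]
end

section
/- For every real polynomial P of degree n ≥ 1, sup_{x∈[−1,1]} √(1−x²)·|P′(x)| ≤ n(n+1) · sup_{x∈[−1,1]} √(1−x²)·|P(x)|; that is, Markov's inequality holds for Schur's norm ‖P‖ = sup_{x∈[−1,1]} √(1−x²)|P(x)| with constant factor n(n+1) (exponent 2). -/
open Polynomial

lemma prod_sign_aux (N i : ℕ) (hi : i < N) :
    ∏ j ∈ (Finset.range N).erase i, (if j < i then (-1 : ℝ) else 1) = (-1) ^ i := by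
  rw [Finset.prod_ite]
  have : {x ∈ (Finset.range N).erase i | x < i} = Finset.range i := by
    ext j; simp; omega
  rw [this]; simp

lemma nodes_lt (N i j : ℕ) (hj : j < N) (hij : i < j) :
    Real.cos ((2 * j + 1) * Real.pi / (2 * N)) < Real.cos ((2 * i + 1) * Real.pi / (2 * N)) := by
  have hN : (0 : ℝ) < N := by exact_mod_cast (by omega : 0 < N)
  have hpi := Real.pi_pos
  have h1 : (j : ℝ) + 1 ≤ N := by exact_mod_cast hj
  have h2 : (i : ℝ) + 1 ≤ j := by exact_mod_cast hij
  apply Real.cos_lt_cos_of_nonneg_of_le_pi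
  · positivity
  · rw [div_le_iff₀ (by positivity)]
    nlinarith
  · gcongr

lemma U_le (n : ℕ) (x : ℝ) (hx : |x| ≤ 1) : (Chebyshev.U ℝ n).eval x ≤ n + 1 := by
  have h := Chebyshev.abs_iterate_derivative_T_real_le ((n : ℤ) + 1) 1 hx
  simp only [Function.iterate_one, Chebyshev.T_derivative_eq_U, eval_mul, add_sub_cancel_right,
    Chebyshev.U_eval_one] at h
  have h' := (le_abs_self _).trans h
  push_cast at h'
  simp only [eval_add, eval_natCast, eval_one] at h'
  have hn : (0 : ℝ) < n + 1 := by positivity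
  exact le_of_mul_le_mul_left h' hn

lemma schur_right (n : ℕ) (Q : ℝ[X]) (hQ : Q.degree < (n + 1 : ℕ)) (M : ℝ)
    (hM : ∀ θ : ℝ, |Real.sin θ * Q.eval (Real.cos θ)| ≤ M) (x : ℝ) (hx1 : x ≤ 1)
    (hx : Real.cos (Real.pi / (2 * (n + 1 : ℕ))) ≤ x) : |Q.eval x| ≤ (n + 1) * M := by
  set N := n + 1 with hN
  have hN0 : (0 : ℝ) < N := by positivity
  have hpi := Real.pi_pos
  set t : ℕ → ℝ := fun k => (2 * k + 1) * Real.pi / (2 * N) with ht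
  set v : ℕ → ℝ := fun k => Real.cos (t k) with hv
  have hlt : ∀ i j, j < N → i < j → v j < v i := fun i j h1 h2 => nodes_lt N i j h1 h2
  have hinj : Set.InjOn v (Finset.range N) := by
    intro i hi j hj hij
    simp only [Finset.coe_range, Set.mem_Iio] at hi hj
    rcases lt_trichotomy i j with h | h | h
    · have := hlt i j hj h; linarith
    · exact h
    · have := hlt j i hi h; linarith
  have hM0 : 0 ≤ M := (abs_nonneg _).trans (hM 0)
  have hv0 : v 0 ≤ x := by
    convert hx using 2
    simp [ht]
  have hvx : ∀ i, i < N → v i ≤ x := by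
    intro i hi
    rcases Nat.eq_zero_or_pos i with h | h
    · rw [h]; exact hv0
    · exact (hlt 0 i hi h).le.trans hv0
  have hsin : ∀ i, i < N → 0 < Real.sin (t i) := by
    intro i hi
    have h1 : (i : ℝ) + 1 ≤ N := by exact_mod_cast hi
    apply Real.sin_pos_of_pos_of_lt_pi
    · simp only [ht]; positivity
    · simp only [ht]; rw [div_lt_iff₀ (by positivity)]; nlinarith
  have hU : ∀ i, (Chebyshev.U ℝ n).eval (v i) * Real.sin (t i) = (-1) ^ i := by
    intro i
    rw [hv, Chebyshev.U_real_cos]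
    have : (((n : ℤ) : ℝ) + 1) * t i = Real.pi / 2 + i * Real.pi := by
      simp only [ht, hN]; push_cast; field_simp; ring
    rw [this, Real.sin_add_nat_mul_pi]; simp
  have hsgn : ∀ i, i < N → 0 ≤ (-1) ^ i * (Lagrange.basis (Finset.range N) v i).eval x := by
    intro i hi
    rw [Lagrange.basis, eval_prod, ← prod_sign_aux N i hi, ← Finset.prod_mul_distrib]
    apply Finset.prod_nonneg
    intro j hj
    simp only [Finset.mem_erase, Finset.mem_range] at hj
    simp only [Lagrange.basisDivisor, eval_mul, eval_C, eval_sub, eval_X]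
    have hxj := hvx j hj.2
    split_ifs with h
    · have := hlt j i hi h
      have h3 : (v i - v j)⁻¹ ≤ 0 := inv_nonpos.2 (by linarith)
      nlinarith [mul_nonneg (neg_nonneg.2 h3) (sub_nonneg.2 hxj)]
    · have := hlt i j hj.2 (by omega)
      have h3 : 0 ≤ (v i - v j)⁻¹ := inv_nonneg.2 (by linarith)
      nlinarith [mul_nonneg h3 (sub_nonneg.2 hxj)]
  have hexp : ∀ R : ℝ[X], R.degree < (N : ℕ) → R.eval x =
      ∑ i ∈ Finset.range N, R.eval (v i) * (Lagrange.basis (Finset.range N) v i).eval x := by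
    intro R hR
    conv_lhs => rw [Lagrange.eq_interpolate (f := R) hinj (by simpa using hR)]
    simp [Lagrange.interpolate_apply, eval_finsetSum]
  have hUdeg : (Chebyshev.U ℝ n).degree < (N : ℕ) := by
    rw [Chebyshev.degree_U_natCast]
    exact_mod_cast Nat.lt_succ_self n
  calc |Q.eval x| = |∑ i ∈ Finset.range N,
        Q.eval (v i) * (Lagrange.basis (Finset.range N) v i).eval x| := by rw [← hexp Q hQ]
    _ ≤ ∑ i ∈ Finset.range N, |Q.eval (v i) * (Lagrange.basis (Finset.range N) v i).eval x| :=
        Finset.abs_sum_le_sum_abs _ _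
    _ ≤ ∑ i ∈ Finset.range N, M * ((Chebyshev.U ℝ n).eval (v i) *
          (Lagrange.basis (Finset.range N) v i).eval x) := by
        apply Finset.sum_le_sum
        intro i hi
        have hi := Finset.mem_range.1 hi
        have hs := hsin i hi
        have h1 := hM (t i)
        have h2 := hsgn i hi
        have h3 := hU i
        set b := (Lagrange.basis (Finset.range N) v i).eval x
        have hb : |b| = (-1) ^ i * b := by
          rw [← abs_of_nonneg h2, abs_mul]; simp
        rw [abs_mul, abs_of_pos hs] at h1
        have h4 : (Chebyshev.U ℝ n).eval (v i) = (-1) ^ i / Real.sin (t i) := by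
          rw [← h3]; field_simp
        rw [abs_mul, h4]
        have h5 : |Q.eval (v i)| ≤ M / Real.sin (t i) := by
          rw [le_div_iff₀ hs, mul_comm]; exact h1
        calc _ ≤ M / Real.sin (t i) * |b| := by gcongr
          _ = _ := by rw [hb]; ring
    _ = M * (Chebyshev.U ℝ n).eval x := by rw [← Finset.mul_sum, ← hexp _ hUdeg]
    _ ≤ M * (n + 1) := by
        gcongr
        apply U_le
        rw [abs_le]
        refine ⟨?_, hx1⟩
        have := Real.neg_one_le_cos (t 0)
        exact this.trans hv0
    _ = _ := by ring

lemma schur (n : ℕ) (Q : ℝ[X]) (hQ : Q.degree < (n + 1 : ℕ)) (M : ℝ)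
    (hM : ∀ θ : ℝ, |Real.sin θ * Q.eval (Real.cos θ)| ≤ M) (x : ℝ) (hx0 : -1 ≤ x) (hx1 : x ≤ 1) :
    |Q.eval x| ≤ (n + 1) * M := by
  rcases le_total (Real.cos (Real.pi / (2 * (n + 1 : ℕ)))) x with h | h
  · exact schur_right n Q hQ M hM x hx1 h
  rcases le_total (Real.cos (Real.pi / (2 * (n + 1 : ℕ)))) (-x) with h' | h'
  · have := schur_right n (Q.comp (-X)) ?_ M ?_ (-x) (by linarith) h'
    · simpa using this
    · by_cases hQ0 : Q = 0
      · simp [hQ0]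
      apply lt_of_le_of_lt degree_le_natDegree
      rw [natDegree_comp]
      simp only [natDegree_neg, natDegree_X, mul_one]
      rwa [← degree_eq_natDegree hQ0]
    · intro θ
      have := hM (Real.pi - θ)
      rw [Real.sin_pi_sub, Real.cos_pi_sub] at this
      simpa using this
  · have hpi := Real.pi_pos
    have hth : 0 ≤ Real.pi / (2 * (n + 1 : ℕ)) := by positivity
    have hth2 : Real.pi / (2 * (n + 1 : ℕ)) ≤ Real.pi / 2 := by
      apply div_le_div_of_nonneg_left hpi.le (by norm_num)
      push_cast; linarith [(Nat.cast_nonneg n : (0:ℝ) ≤ n)]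
    have h1 := Real.mul_le_sin hth hth2
    have h2 : 2 / Real.pi * (Real.pi / (2 * (n + 1 : ℕ))) = 1 / (n + 1) := by
      push_cast; field_simp
    rw [h2] at h1
    have h3 := hM (Real.arccos x)
    rw [Real.cos_arccos hx0 hx1, Real.sin_arccos, abs_mul, abs_of_nonneg (Real.sqrt_nonneg _)] at h3
    have hs : 1 / ((n : ℝ) + 1) ≤ √(1 - x ^ 2) := by
      apply h1.trans
      apply Real.le_sqrt_of_sq_le
      rw [Real.sin_sq]
      have : x ^ 2 ≤ Real.cos (Real.pi / (2 * (n + 1 : ℕ))) ^ 2 :=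
        sq_le_sq' (by linarith) h
      linarith
    have h4 : 1 / ((n : ℝ) + 1) * |Q.eval x| ≤ M :=
      (mul_le_mul_of_nonneg_right hs (abs_nonneg _)).trans h3
    have hn : (0 : ℝ) < n + 1 := by positivity
    rw [one_div, inv_mul_le_iff₀ hn] at h4
    exact h4

noncomputable def HH (c : ℝ) : ℕ → ℝ[X]
  | 0 => 0
  | 1 => 1
  | (m + 2) => C (2 * c) * X * HH c (m + 1) - (X ^ 2 - C (1 - c ^ 2)) * HH c m

lemma HH_deg (c : ℝ) (m : ℕ) : (HH c m).natDegree ≤ m - 1 ∧ (HH c (m + 1)).natDegree ≤ m := by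
  induction m with
  | zero => simp [HH]
  | succ m ih =>
    refine ⟨by simpa using ih.2, ?_⟩
    rw [HH]
    rcases Nat.eq_zero_or_pos m with h | h
    · subst h; simp only [HH, mul_zero, sub_zero, mul_one]; compute_degree
    refine (natDegree_sub_le_of_le (m := m + 1) (n := m + 1) ?_ ?_).trans (max_self _).le
    · refine natDegree_mul_le.trans ?_
      have : (C (2 * c) * X : ℝ[X]).natDegree ≤ 1 := by compute_degree
      omega
    · refine natDegree_mul_le.trans ?_
      have : (X ^ 2 - C (1 - c ^ 2) : ℝ[X]).natDegree ≤ 2 := by compute_degree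
      omega

lemma HH_eval (φ t : ℝ) (m : ℕ) :
    Real.cos (φ + t) ^ m - Real.cos (φ - t) ^ m =
      -2 * Real.sin φ * Real.sin t * (HH (Real.cos φ) m).eval (Real.cos t) := by
  induction m using Nat.twoStepInduction with
  | zero => simp [HH]
  | one => simp [HH, Real.cos_add, Real.cos_sub]; ring
  | more m h1 h2 =>
    simp only [HH, eval_sub, eval_mul, eval_C, eval_X, eval_pow]
    have e1 : Real.cos (φ + t) + Real.cos (φ - t) = 2 * Real.cos φ * Real.cos t := by
      rw [Real.cos_add, Real.cos_sub]; ring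
    have e2 : Real.cos (φ + t) * Real.cos (φ - t) = Real.cos t ^ 2 - (1 - Real.cos φ ^ 2) := by
      rw [Real.cos_add, Real.cos_sub]
      have := Real.sin_sq_add_cos_sq φ
      have := Real.sin_sq_add_cos_sq t
      grind
    set a := Real.cos (φ + t)
    set b := Real.cos (φ - t)
    rw [← e2, ← e1]
    linear_combination (a + b) * h2 - a * b * h1

lemma HH_one (c : ℝ) (m : ℕ) : (HH c m).eval 1 = m * c ^ (m - 1) := by
  induction m using Nat.twoStepInduction with
  | zero => simp [HH]
  | one => simp [HH]
  | more m h1 h2 =>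
    simp only [HH, eval_sub, eval_mul, eval_C, eval_X, eval_pow, h1, h2]
    rcases m with _ | m
    · simp
    · simp; ring

lemma bernstein_ineq (n : ℕ) (hn : 1 ≤ n) (P : ℝ[X]) (hP : P.natDegree = n) (B : ℝ)
    (hB : ∀ θ : ℝ, |P.eval (Real.cos θ)| ≤ B) (φ : ℝ) :
    |Real.sin φ * (derivative P).eval (Real.cos φ)| ≤ n * B := by
  obtain ⟨k, rfl⟩ : ∃ k, n = k + 1 := ⟨n - 1, by omega⟩
  set Q : ℝ[X] := ∑ m ∈ Finset.range (k + 1 + 1),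
    C (-Real.sin φ * P.coeff m) * HH (Real.cos φ) m with hQ
  have hQ1 : Q.eval 1 = -(Real.sin φ * (derivative P).eval (Real.cos φ)) := by
    rw [derivative_eval, sum_over_range' _ (by simp) (k + 1 + 1) (by omega), hQ, eval_finsetSum,
      Finset.mul_sum, ← Finset.sum_neg_distrib]
    refine Finset.sum_congr rfl fun m _ => ?_
    simp only [eval_mul, eval_C, HH_one]; ring
  have hQd : Q.degree < (k + 1 : ℕ) := by
    have : Q.natDegree ≤ k := by
      apply natDegree_sum_le_of_forall_le
      intro m hm
      have := Finset.mem_range.1 hm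
      refine natDegree_C_mul_le _ _ |>.trans ?_
      have := (HH_deg (Real.cos φ) m).1
      omega
    refine lt_of_le_of_lt (degree_le_of_natDegree_le this) ?_
    exact_mod_cast Nat.lt_succ_self k
  have hQe : ∀ t, Real.sin t * Q.eval (Real.cos t) =
      (P.eval (Real.cos (φ + t)) - P.eval (Real.cos (φ - t))) / 2 := by
    intro t
    rw [eval_eq_sum_range (p := P), eval_eq_sum_range (p := P), hP, ← Finset.sum_sub_distrib, hQ, eval_finsetSum,
      Finset.mul_sum, Finset.sum_div]
    refine Finset.sum_congr rfl fun m _ => ?_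
    simp only [eval_mul, eval_C]
    linear_combination (-P.coeff m / 2) * HH_eval φ t m
  have := schur k Q hQd B ?_ 1 (by norm_num) le_rfl
  · rw [hQ1, abs_neg] at this
    push_cast
    exact this
  · intro t
    rw [hQe]
    have h1 := abs_le.1 (hB (φ + t))
    have h2 := abs_le.1 (hB (φ - t))
    rw [abs_le]
    constructor <;> linarith [h1.1, h1.2, h2.1, h2.2]

/-- (Markov's inequality for Schur's norm.) For every real polynomial `P`
of degree `n ≥ 1`,
`sup_{x∈[-1,1]} √(1-x²) |P'(x)| ≤ n(n+1) sup_{x∈[-1,1]} √(1-x²) |P(x)|`. -/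
theorem statement18 (P : Polynomial ℝ) (n : ℕ) (hn : 1 ≤ n) (hdeg : P.natDegree = n) :
    (⨆ x : Set.Icc (-1 : ℝ) 1,
        Real.sqrt (1 - (x : ℝ) ^ 2) * |(Polynomial.derivative P).eval (x : ℝ)|) ≤
      (n : ℝ) * ((n : ℝ) + 1) *
        ⨆ x : Set.Icc (-1 : ℝ) 1, Real.sqrt (1 - (x : ℝ) ^ 2) * |P.eval (x : ℝ)| := by
  have hbdd : BddAbove (Set.range fun x : Set.Icc (-1 : ℝ) 1 =>
      Real.sqrt (1 - (x : ℝ) ^ 2) * |P.eval (x : ℝ)|) := by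
    apply IsCompact.bddAbove
    apply isCompact_range
    have := P.continuous
    fun_prop
  set M := ⨆ x : Set.Icc (-1 : ℝ) 1, Real.sqrt (1 - (x : ℝ) ^ 2) * |P.eval (x : ℝ)| with hMdef
  have hM : ∀ θ : ℝ, |Real.sin θ * P.eval (Real.cos θ)| ≤ M := by
    intro θ
    have := le_ciSup hbdd ⟨Real.cos θ, Real.neg_one_le_cos θ, Real.cos_le_one θ⟩
    simp only [← Real.sin_sq, Real.sqrt_sq_eq_abs] at this
    rw [abs_mul]
    exact this
  have hdeg' : P.degree < (n + 1 : ℕ) := by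
    refine lt_of_le_of_lt (degree_le_of_natDegree_le hdeg.le) ?_
    exact_mod_cast Nat.lt_succ_self n
  have hB : ∀ θ : ℝ, |P.eval (Real.cos θ)| ≤ (n + 1) * M := fun θ =>
    schur n P hdeg' M hM _ (Real.neg_one_le_cos θ) (Real.cos_le_one θ)
  have : Nonempty (Set.Icc (-1 : ℝ) 1) := ⟨⟨0, by norm_num⟩⟩
  apply ciSup_le
  rintro ⟨x, hx0, hx1⟩
  have := bernstein_ineq n hn P hdeg _ hB (Real.arccos x)
  rw [Real.cos_arccos hx0 hx1, Real.sin_arccos, abs_mul, abs_of_nonneg (Real.sqrt_nonneg _)] at this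
  rw [mul_assoc]
  exact this
end

section
/- Let A be a commutative ring and D : A → A a derivation (additive map with D(fg) = f·D(g) + g·D(f)). Then for every f ∈ A and every integer k ≥ 1, k! · (D(f))^k = Σ_{j=0}^{k} (−1)^j · C(k,j) · f^j · D^{(k)}(f^{k−j}), where D^{(k)} denotes the k-fold iterate D ∘ ⋯ ∘ D and C(k,j) is the binomial coefficient. -/
theorem aux_binom {R : Type*} [Ring R] (m P : R) (n : ℕ) :
    (fun Q : R => Q * m - m * Q)^[n] P =
      ∑ j ∈ Finset.range (n + 1), (-1 : R) ^ j * (Nat.choose n j : R) * (m ^ j * P * m ^ (n - j)) := by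
  have hc : Commute (-(LinearMap.mulLeft ℤ m)) (LinearMap.mulRight ℤ m) :=
    Commute.neg_left (by ext x; simp [mul_assoc])
  have h1 : (fun Q : R => Q * m - m * Q) =
      ⇑(-(LinearMap.mulLeft ℤ m) + LinearMap.mulRight ℤ m) := by
    funext Q
    simp [sub_eq_neg_add]
  rw [h1, ← Module.End.coe_pow, hc.add_pow, LinearMap.sum_apply]
  refine Finset.sum_congr rfl fun j _ => ?_
  rw [neg_pow, LinearMap.pow_mulLeft, LinearMap.pow_mulRight, ← (Nat.cast_commute (n.choose j) _).eq,
    ← nsmul_eq_mul, mul_assoc, mul_assoc, ← nsmul_eq_mul]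
  rcases neg_one_pow_eq_or (Module.End ℤ R) j with h | h <;>
  rcases Nat.even_or_odd j with h' | h' <;>
  simp [h'.neg_one_pow, mul_assoc]

theorem aux_step {R : Type*} [Ring R] (d m n : R) (h : d * m - m * d = n) (hn : n * m = m * n)
    (P : R) (j : ℕ) :
    (fun Q : R => Q * m - m * Q)^[j + 1] (P * d) =
      (fun Q : R => Q * m - m * Q)^[j + 1] P * d
        + (j + 1 : R) * ((fun Q : R => Q * m - m * Q)^[j] P * n) := by
  have hd : d * m = m * d + n := by rw [← h]; abel
  induction j with
  | zero => 
    simp [sub_mul, mul_assoc, hd, mul_add]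
    abel
  | succ j ih =>
    rw [Function.iterate_succ_apply', ih]
    rw [Function.iterate_succ_apply' _ (j + 1) P, Function.iterate_succ_apply' _ j P]
    generalize (fun Q : R => Q * m - m * Q)^[j] P = X
    have hj : m * (j : R) = j * m := (Nat.cast_commute j m).eq.symm
    have hj' : ∀ y, m * ((j : R) * y) = j * (m * y) := fun y => by
      rw [← mul_assoc, hj, mul_assoc]
    push_cast
    simp only [sub_mul, mul_sub, add_mul, mul_add, mul_assoc, hd, hn, hj', one_mul]
    abel

theorem aux_main {R : Type*} [Ring R] (d m n : R) (h : d * m - m * d = n) (hn : n * m = m * n)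
    (k : ℕ) :
    (fun Q : R => Q * m - m * Q)^[k] (d ^ k) = (k.factorial : R) * n ^ k ∧
    (fun Q : R => Q * m - m * Q)^[k + 1] (d ^ k) = 0 := by
  have hz : ∀ k : ℕ, (fun Q : R => Q * m - m * Q)^[k] (d ^ k) = (k.factorial : R) * n ^ k →
      (fun Q : R => Q * m - m * Q)^[k + 1] (d ^ k) = 0 := by
    intro k hk
    rw [Function.iterate_succ_apply', hk]
    have h1 : Commute ((k.factorial : R) * n ^ k) m :=
      (Nat.cast_commute _ m).mul_left (Commute.pow_left hn k)
    exact sub_eq_zero.2 h1.eq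
  suffices hs : (fun Q : R => Q * m - m * Q)^[k] (d ^ k) = (k.factorial : R) * n ^ k from
    ⟨hs, hz k hs⟩
  induction k with
  | zero => simp
  | succ k ih =>
    rw [pow_succ, aux_step d m n h hn, hz k ih, ih, Nat.factorial_succ, pow_succ]
    push_cast
    simp [mul_assoc]

/-- Let `A` be a commutative ring and `D : A → A` a derivation
(additive map satisfying the Leibniz rule). Then for every `f ∈ A` and every `k ≥ 1`,
`k! * (D f)^k = ∑_{j=0}^{k} (-1)^j * C(k,j) * f^j * D^[k] (f^(k-j))`. -/
theorem statement19 {A : Type*} [CommRing A] (D : A → A)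
    (hadd : ∀ x y : A, D (x + y) = D x + D y)
    (hmul : ∀ x y : A, D (x * y) = x * D y + y * D x)
    (f : A) (k : ℕ) (hk : 1 ≤ k) :
    (k.factorial : A) * (D f) ^ k =
      ∑ j ∈ Finset.range (k + 1),
        (-1 : A) ^ j * (Nat.choose k j : A) * f ^ j * D^[k] (f ^ (k - j)) := by
  let d : AddMonoid.End A := AddMonoidHom.mk' D hadd
  let L : A → AddMonoid.End A := fun a => AddMonoidHom.mulLeft a
  let m : AddMonoid.End A := L f
  let n : AddMonoid.End A := L (D f)
  have h : d * m - m * d = n := by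
    ext x
    change D (f * x) - f * D x = D f * x
    rw [hmul]; ring
  have hn : n * m = m * n := by
    ext x
    change D f * (f * x) = f * (D f * x)
    ring
  have hm : ∀ (a : A) (j : ℕ) (x : A),
      (L a ^ j) x = a ^ j * x := by
    intro a j x
    induction j with
    | zero => simp
    | succ j ih =>
      rw [pow_succ', pow_succ', mul_assoc, ← ih]
      rfl
  have hd : ∀ (j : ℕ) (x : A), (d ^ j) x = D^[j] x := by
    intro j x
    induction j with
    | zero => simp
    | succ j ih =>
      rw [pow_succ', Function.iterate_succ_apply', ← ih]
      rfl
  have key := (aux_main d m n h hn k).1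
  rw [aux_binom] at key
  have key1 := congrArg (fun F : AddMonoid.End A => F 1) key.symm
  have hc : ∀ (a : ℕ) (F : AddMonoid.End A) (x : A), ((a : AddMonoid.End A) * F) x = a * F x := by
    intro a F x
    rw [← nsmul_eq_mul, ← nsmul_eq_mul]
    rfl
  simp only [hc] at key1
  rw [show (n ^ k) 1 = D f ^ k by rw [hm, mul_one]] at key1
  rw [key1]
  refine (AddMonoidHom.finsetSum_apply _ _ _).trans (Finset.sum_congr rfl fun j _ => ?_)
  have e : ((m ^ j * d ^ k * m ^ (k - j) : AddMonoid.End A)) 1 = f ^ j * D^[k] (f ^ (k - j)) := by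
    change (m ^ j) ((d ^ k) ((m ^ (k - j)) 1)) = _
    rw [hm, hd, hm, mul_one]
  rw [mul_assoc ((-1 : A) ^ j * _), ← e]
  generalize (m ^ j * d ^ k * m ^ (k - j) : AddMonoid.End A) = F
  rw [mul_assoc ((-1 : A) ^ j), ← hc]
  have hs : ∀ (i : ℕ) (y : A), ((-1 : AddMonoid.End A) ^ i) y = (-1 : A) ^ i * y := by
    intro i y
    induction i with
    | zero => simp
    | succ i ih =>
      rw [pow_succ', pow_succ', mul_assoc, ← ih, neg_one_mul]
      rfl
  rw [← hs]
  rfl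
end
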